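/- Let 𝕎◇ ⊆ [−1/2, 1/2]² be a single parallelogram band, i.e., 𝕎◇ = {(f,g) : |a f + b g − u| ≤ W⁰ and |c f + d g − v| ≤ W¹} with ad − bc ≠ 0 and W⁰, W¹ > 0. Then there exists a constant C > 0 (depending only on a, b, c, d, W⁰, W¹) such that for all M, N ≥ 2, the squared Frobenius norm of B_{(M,N),𝕎◇} satisfies ‖B_{(M,N),𝕎◇}‖_F² ≥ MN·‖𝕎◇‖ − C·(M·log N + N·log M), where ‖𝕎◇‖ = 4W⁰W¹/|ad − bc| is the Lebesgue measure of 𝕎◇. -/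

import Mathlib

open MeasureTheory Matrix Real Set

/-- The 2-D prolate matrix `B_{(M,N),𝕎}`, indexed by pairs, with entries
`∫_𝕎 exp(2πi (f (m−p) + g (n−q))) df dg`. -/
noncomputable def prolate2D (M N : ℕ) (𝕎 : Set (ℝ × ℝ)) :
    Matrix (Fin M × Fin N) (Fin M × Fin N) ℂ :=
  fun i j => ∫ fg in 𝕎,
    Complex.exp (2 * (Real.pi : ℂ) * Complex.I *
      ((fg.1 : ℂ) * (((i.1 : ℕ) : ℂ) - ((j.1 : ℕ) : ℂ)) +
       (fg.2 : ℂ) * (((i.2 : ℕ) : ℂ) - ((j.2 : ℕ) : ℂ))))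

/-- The parallelogram band `{(f,g) : |af + bg − u| ≤ W0 and |cf + dg − v| ≤ W1}`. -/
def pband (a b c d u v W0 W1 : ℝ) : Set (ℝ × ℝ) :=
  {fg : ℝ × ℝ | |a * fg.1 + b * fg.2 - u| ≤ W0 ∧ |c * fg.1 + d * fg.2 - v| ≤ W1}


open scoped ENNReal

lemma pb_sum_range (M : ℕ) (hM : 1 ≤ M) (n : ℕ) :
    ∑ k ∈ Finset.range (n+1), (min (k:ℝ) M) / (k:ℝ)^2 ≤
      if n ≤ M then 1 + Real.log M else 2 + Real.log M - M / n := by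
  have hM0 : (1:ℝ) ≤ M := by exact_mod_cast hM
  have hlog : 0 ≤ Real.log M := Real.log_nonneg hM0
  have key : ∀ n : ℕ, n ≤ M → ∑ k ∈ Finset.range (n+1), (min (k:ℝ) M) / (k:ℝ)^2 ≤ 1 + Real.log M := by
    intro n hn
    have h1 : ∑ k ∈ Finset.range (n+1), (min (k:ℝ) M) / (k:ℝ)^2 = ((harmonic n : ℚ) : ℝ) := by
      rw [Finset.sum_range_succ']
      simp only [harmonic]
      push_cast
      simp only [CharP.cast_eq_zero, ne_eq, OfNat.ofNat_ne_zero, not_false_eq_true, zero_pow, div_zero, add_zero]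
      apply Finset.sum_congr rfl
      intro k hk
      have : k + 1 ≤ M := by have := Finset.mem_range.1 hk; omega
      have h2 : ((k:ℝ)+1) ≤ M := by exact_mod_cast this
      rw [min_eq_left h2]
      field_simp
    rw [h1]
    refine (harmonic_le_one_add_log n).trans ?_
    rcases Nat.eq_zero_or_pos n with h | h
    · subst h; simpa using hlog
    · have : Real.log n ≤ Real.log M := Real.log_le_log (by exact_mod_cast h) (by exact_mod_cast hn)
      linarith
  induction n with
  | zero => simpa using key 0 (by omega)
  | succ n ih =>
    split_ifs with h
    · exact key _ h
    · rw [Finset.sum_range_succ]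
      have hn : M ≤ n := by omega
      have hnr : (M:ℝ) ≤ n := by exact_mod_cast hn
      have hn0 : (0:ℝ) < n := by linarith
      have ih' : ∑ k ∈ Finset.range (n+1), (min (k:ℝ) M) / (k:ℝ)^2 ≤ 2 + Real.log M - M / n := by
        split_ifs at ih with h2
        · have : n = M := by omega
          subst this
          rw [div_self hn0.ne']; linarith
        · exact ih
      push_cast
      rw [min_eq_right (by linarith)]
      have : (M:ℝ) / ((n:ℝ)+1)^2 ≤ M / n - M / (n+1) := by
        have : (M:ℝ) / n - M / (n+1) = M / (n * (n+1)) := by field_simp; ring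
        rw [this]
        apply div_le_div_of_nonneg_left (by linarith) (by positivity)
        nlinarith
      linarith

lemma pb_tsum_nat (M : ℕ) (hM : 2 ≤ M) :
    ∑' k : ℕ, ENNReal.ofReal ((min (k:ℝ) M) / (k:ℝ)^2) ≤ ENNReal.ofReal (4 * Real.log M) := by
  have hM0 : (2:ℝ) ≤ M := by exact_mod_cast hM
  have hl : Real.log 2 ≤ Real.log M := Real.log_le_log (by norm_num) hM0
  have h2 := Real.log_two_gt_d9
  apply ENNReal.tsum_le_of_sum_range_le
  intro n
  rw [← ENNReal.ofReal_sum_of_nonneg (fun k _ => by positivity)]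
  apply ENNReal.ofReal_le_ofReal
  have h1 : ∑ k ∈ Finset.range n, (min (k:ℝ) M) / (k:ℝ)^2 ≤
      ∑ k ∈ Finset.range (n+1), (min (k:ℝ) M) / (k:ℝ)^2 := by
    rw [Finset.sum_range_succ]
    have : 0 ≤ (min (n:ℝ) M) / (n:ℝ)^2 := by positivity
    linarith
  have h3 := pb_sum_range M (by omega) n
  have h4 : (0:ℝ) ≤ M / n := by positivity
  split_ifs at h3 <;> linarith

lemma pb_tsum_int (M : ℕ) (hM : 2 ≤ M) (b : ℤ → ℝ≥0∞)
    (hb : ∀ k : ℤ, k ≠ 0 → b k ≤ ENNReal.ofReal (1 / (k:ℝ)^2)) :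
    ∑' k : ℤ, ((min k.natAbs M : ℕ) : ℝ≥0∞) * b k ≤ ENNReal.ofReal (8 * Real.log M) := by
  have h1 : ∀ k : ℤ, ((min k.natAbs M : ℕ) : ℝ≥0∞) * b k ≤
      ENNReal.ofReal ((min (k.natAbs:ℝ) M) / (k.natAbs:ℝ)^2) := by
    intro k
    rcases eq_or_ne k 0 with h | h
    · subst h; simp
    · calc _ ≤ ((min k.natAbs M : ℕ) : ℝ≥0∞) * ENNReal.ofReal (1 / (k:ℝ)^2) := by
            gcongr; exact hb k h
        _ = _ := by
          rw [← ENNReal.ofReal_natCast, ← ENNReal.ofReal_mul (by positivity)]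
          congr 1
          push_cast
          rw [Nat.cast_natAbs]
          push_cast
          rw [sq_abs]; ring
  refine (ENNReal.tsum_le_tsum h1).trans ?_
  let s : ℕ × Bool → ℤ := fun p => if p.2 then (p.1:ℤ) else -(p.1:ℤ)
  have hs : Function.Surjective s := by
    intro k
    rcases Int.natAbs_eq k with h | h
    · exact ⟨(k.natAbs, true), by simp [s, ← h]⟩
    · exact ⟨(k.natAbs, false), by simp only [s]; simpa using h.symm⟩
  refine (ENNReal.tsum_le_tsum_comp_of_surjective hs _).trans ?_
  have h2 : ∀ p : ℕ × Bool, (s p).natAbs = p.1 := by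
    rintro ⟨n, b⟩; cases b <;> simp [s]
  simp only [h2]
  rw [ENNReal.tsum_prod']
  simp only [tsum_fintype, Fintype.sum_bool]
  rw [ENNReal.tsum_add]
  refine (add_le_add (pb_tsum_nat M hM) (pb_tsum_nat M hM)).trans ?_
  have hl : 0 ≤ Real.log M := Real.log_natCast_nonneg M
  rw [← ENNReal.ofReal_add (by positivity) (by positivity)]
  apply ENNReal.ofReal_le_ofReal; linarith

/-- counting -/
noncomputable def pbT (M : ℕ) (k : ℤ) : ℕ :=
  ∑ m : Fin M, ∑ p : Fin M, if ((p:ℕ):ℤ) - ((m:ℕ):ℤ) = k then 1 else 0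

lemma pbT_le (M : ℕ) (k : ℤ) : pbT M k ≤ M := by
  unfold pbT
  calc _ ≤ ∑ m : Fin M, 1 := by
        apply Finset.sum_le_sum
        intro m _
        rw [← Finset.card_filter, Finset.card_le_one]
        intro x hx y hy
        simp at hx hy
        ext; omega
    _ = M := by simp

lemma le_pbT (M : ℕ) (k : ℤ) : M ≤ pbT M k + min k.natAbs M := by
  have h : M - k.natAbs ≤ pbT M k := by
    unfold pbT
    simp only [← Finset.card_filter]
    have h1 : ∀ m : Fin M, (if (0 ≤ (m:ℤ) + k ∧ (m:ℤ) + k < M) then 1 else 0) ≤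
        (Finset.univ.filter (fun p : Fin M => ((p:ℕ):ℤ) - ((m:ℕ):ℤ) = k)).card := by
      intro m
      split_ifs with h
      · rw [Nat.one_le_iff_ne_zero, Finset.card_ne_zero]
        refine ⟨⟨((m:ℤ)+k).toNat, by omega⟩, ?_⟩
        simp; omega
      · exact Nat.zero_le _
    refine le_trans ?_ (Finset.sum_le_sum (fun m _ => h1 m))
    rw [← Finset.card_filter]
    have h2 : (Finset.univ.filter (fun m : Fin M => ¬ (0 ≤ (m:ℤ) + k ∧ (m:ℤ) + k < M))).card ≤ k.natAbs := by
      rw [← Finset.card_map Fin.valEmbedding]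
      have : (Finset.univ.filter (fun m : Fin M => ¬ (0 ≤ (m:ℤ) + k ∧ (m:ℤ) + k < M))).map Fin.valEmbedding
          ⊆ if 0 ≤ k then Finset.Ico (M - k.natAbs) M else Finset.range k.natAbs := by
        intro x hx
        simp only [Finset.mem_map, Finset.mem_filter, Finset.mem_univ, true_and] at hx
        obtain ⟨m, hm, rfl⟩ := hx
        have := m.2
        simp only [Fin.valEmbedding_apply]
        split_ifs
        · rw [Finset.mem_Ico]; omega
        · rw [Finset.mem_range]; omega
      refine (Finset.card_le_card this).trans ?_
      split_ifs <;> simp; omega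
    have h3 := Finset.card_filter_add_card_filter_not (s := (Finset.univ : Finset (Fin M)))
      (fun m : Fin M => (0 ≤ (m:ℤ) + k ∧ (m:ℤ) + k < M))
    simp only [Finset.card_univ, Fintype.card_fin] at h3
    omega
  omega

lemma pbT_mul (M N : ℕ) (k l : ℤ) :
    M * N ≤ pbT M k * pbT N l + (N * min k.natAbs M + M * min l.natAbs N) := by
  have h1 := le_pbT M k
  have h2 := le_pbT N l
  have h3 := pbT_le M k
  nlinarith [Nat.mul_le_mul_right N h1, Nat.mul_le_mul_left (pbT M k) h2,
    Nat.mul_le_mul_right (min l.natAbs N) h3]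

lemma pbT_sum (M : ℕ) (F : ℤ → ℝ≥0∞) :
    ∑' k : ℤ, (pbT M k : ℝ≥0∞) * F k = ∑ m : Fin M, ∑ p : Fin M, F (((p:ℕ):ℤ) - ((m:ℕ):ℤ)) := by
  have : ∀ k : ℤ, (pbT M k : ℝ≥0∞) * F k =
      ∑ m : Fin M, ∑ p : Fin M, if k = ((p:ℕ):ℤ) - ((m:ℕ):ℤ) then F k else 0 := by
    intro k
    unfold pbT
    push_cast
    simp only [Finset.sum_mul]
    refine Finset.sum_congr rfl fun m _ => Finset.sum_congr rfl fun p _ => ?_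
    by_cases h : ((p:ℕ):ℤ) - ((m:ℕ):ℤ) = k
    · simp [h]
    · simp [h, Ne.symm h]
  simp only [this]
  rw [Summable.tsum_finsetSum (fun _ _ => ENNReal.summable)]
  refine Finset.sum_congr rfl fun m _ => ?_
  rw [Summable.tsum_finsetSum (fun _ _ => ENNReal.summable)]
  refine Finset.sum_congr rfl fun p _ => ?_
  rw [tsum_ite_eq]

lemma pb_comb (a : ℤ → ℤ → ℝ≥0∞)
    (h1 : ∀ k : ℤ, k ≠ 0 → ∑' l, a k l ≤ ENNReal.ofReal (1 / (k:ℝ)^2))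
    (h2 : ∀ l : ℤ, l ≠ 0 → ∑' k, a k l ≤ ENNReal.ofReal (1 / (l:ℝ)^2))
    (M N : ℕ) (hM : 2 ≤ M) (hN : 2 ≤ N) :
    (M:ℝ≥0∞) * N * (∑' k, ∑' l, a k l) ≤
      (∑ m : Fin M, ∑ p : Fin M, ∑ n : Fin N, ∑ q : Fin N,
        a (((p:ℕ):ℤ) - ((m:ℕ):ℤ)) (((q:ℕ):ℤ) - ((n:ℕ):ℤ)))
      + (N * ENNReal.ofReal (8 * Real.log M) + M * ENNReal.ofReal (8 * Real.log N)) := by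
  have e1 := pbT_sum M (fun k => ∑' l : ℤ, (pbT N l : ℝ≥0∞) * a k l)
  simp only [pbT_sum N] at e1
  rw [← e1]
  have b1 := pb_tsum_int M hM _ h1
  have b2 := pb_tsum_int N hN _ h2
  refine le_trans ?_ (add_le_add_right (add_le_add (mul_le_mul_right b1 (N:ℝ≥0∞)) (mul_le_mul_right b2 (M:ℝ≥0∞))) _)
  have c2 : ∑' l : ℤ, ((min l.natAbs N : ℕ) : ℝ≥0∞) * ∑' k, a k l =
      ∑' k : ℤ, ∑' l : ℤ, ((min l.natAbs N : ℕ) : ℝ≥0∞) * a k l := by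
    rw [ENNReal.tsum_comm]
    simp only [ENNReal.tsum_mul_left]
  rw [c2]
  simp only [← pbT_sum N]
  simp only [← ENNReal.tsum_mul_left, ← ENNReal.tsum_add]
  refine ENNReal.tsum_le_tsum fun k => ENNReal.tsum_le_tsum fun l => ?_
  have := pbT_mul M N k l
  have h : ((M * N : ℕ) : ℝ≥0∞) ≤ ((pbT M k * pbT N l + (N * min k.natAbs M + M * min l.natAbs N) : ℕ) : ℝ≥0∞) := by
    exact_mod_cast this
  push_cast at h ⊢
  calc _ ≤ _ := mul_le_mul_left h (a k l)
    _ = _ := by ring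

noncomputable def pbE (k : ℤ) (x : ℝ) : ℂ := Complex.exp (((-(2 * π * k * x) : ℝ) : ℂ) * Complex.I)

lemma pbE_norm (k : ℤ) (x : ℝ) : ‖pbE k x‖ = 1 := Complex.norm_exp_ofReal_mul_I _

lemma pbE_cont (k : ℤ) : Continuous (pbE k) := by unfold pbE; fun_prop

lemma pb_parseval (φ : ℝ → ℂ) (hm : StronglyMeasurable φ) (hb : ∀ x, ‖φ x‖ ≤ 1)
    (h0 : ∀ x, x ∉ Set.Icc (-(1/2) : ℝ) (1/2) → φ x = 0) :
    ∑' k : ℤ, ‖∫ x, pbE k x * φ x‖ₑ ^ 2 = ∫⁻ x, ‖φ x‖ₑ ^ 2 := by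
  have hab : (-(1/2) : ℝ) < 1/2 := by norm_num
  have hL : MemLp φ 2 (volume.restrict (Ioc (-(1/2) : ℝ) (1/2))) :=
    MemLp.of_bound hm.aestronglyMeasurable 1 (Filter.Eventually.of_forall hb)
  have key := hasSum_sq_fourierCoeffOn hab hL
  have hset : ∀ F : ℝ → ℂ, ∫ x in (-(1/2):ℝ)..(1/2), F x * φ x = ∫ x, F x * φ x := by
    intro F
    rw [intervalIntegral.integral_of_le hab.le, ← integral_Icc_eq_integral_Ioc]
    apply setIntegral_eq_integral_of_forall_compl_eq_zero
    intro x hx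
    simp [h0 x hx]
  have hc : ∀ k, fourierCoeffOn hab φ k = ∫ x, pbE k x * φ x := by
    intro k
    rw [fourierCoeffOn_eq_integral, ← hset]
    norm_num
    congr 1
    ext x
    congr 1
    rw [← Complex.exp_conj, pbE]
    congr 1
    have h2 : (starRingEnd ℂ) 2 = 2 := Complex.conj_ofNat 2
    simp [h2]
    ring
  simp only [hc] at key
  have hn : ((1/2:ℝ) - -(1/2))⁻¹ • ∫ x in (-(1/2):ℝ)..(1/2), ‖φ x‖ ^ 2 = ∫ x, ‖φ x‖^2 := by
    rw [intervalIntegral.integral_of_le hab.le, ← integral_Icc_eq_integral_Ioc]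
    norm_num
    apply setIntegral_eq_integral_of_forall_compl_eq_zero
    intro x hx
    have := h0 x (by simpa using hx)
    simp [this]
  rw [hn] at key
  have hintg : Integrable (fun x => ‖φ x‖^2) := by
    have : IntegrableOn (fun x => ‖φ x‖^2) (Icc (-(1/2) : ℝ) (1/2)) := by
      refine Measure.integrableOn_of_bounded (M := 1) (by simp) (by fun_prop) ?_
      refine Filter.Eventually.of_forall fun x => ?_
      simp only [norm_pow, norm_norm]
      exact pow_le_one₀ (norm_nonneg _) (hb x)
    refine this.integrable_of_forall_notMem_eq_zero ?_
    intro x hx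
    simp [h0 x hx]
  have e : ∀ z : ℂ, ‖z‖ₑ ^ 2 = ENNReal.ofReal (‖z‖^2) := by
    intro z
    rw [ENNReal.ofReal_pow (norm_nonneg _), ofReal_norm_eq_enorm]
  simp only [e]
  rw [← ENNReal.ofReal_tsum_of_nonneg (fun _ => by positivity) key.summable, key.tsum_eq,
    ofReal_integral_eq_lintegral_ofReal hintg (Filter.Eventually.of_forall fun _ => by positivity)]

noncomputable def pbcoef (W : Set (ℝ × ℝ)) (k l : ℤ) : ℂ :=
  ∫ p in W, pbE k p.1 * pbE l p.2

noncomputable def pbInd (W : Set (ℝ × ℝ)) (p : ℝ × ℝ) : ℂ := W.indicator (fun _ => (1:ℂ)) p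

noncomputable def pbslice (W : Set (ℝ × ℝ)) (l : ℤ) (f : ℝ) : ℂ :=
  ∫ g, pbE l g * pbInd W (f, g)

lemma pbInd_meas {W : Set (ℝ × ℝ)} (hW : MeasurableSet W) : StronglyMeasurable (pbInd W) :=
  stronglyMeasurable_const.indicator hW

lemma pbslice_meas {W : Set (ℝ × ℝ)} (hW : MeasurableSet W) (l : ℤ) :
    StronglyMeasurable (pbslice W l) := by
  unfold pbslice
  have : StronglyMeasurable (fun p : ℝ × ℝ => pbE l p.2 * pbInd W p) :=
    ((pbE_cont l).comp continuous_snd).stronglyMeasurable.mul (pbInd_meas hW)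
  exact this.integral_prod_right (ν := volume)

variable {W : Set (ℝ × ℝ)}

lemma pbslice_eq (hW : MeasurableSet W) (l : ℤ) (f : ℝ) :
    pbslice W l f = ∫ g in {g | (f, g) ∈ W}, pbE l g := by
  have hm : MeasurableSet {g | (f, g) ∈ W} := measurable_prodMk_left hW
  rw [← integral_indicator hm]
  unfold pbslice pbInd
  congr 1
  ext g
  by_cases h : (f, g) ∈ W <;> simp [h, Set.indicator]

lemma pbslice_le (hW : MeasurableSet W)
    (hsub : W ⊆ Set.Icc (-(1 / 2) : ℝ) (1 / 2) ×ˢ Set.Icc (-(1 / 2) : ℝ) (1 / 2)) (l : ℤ) (f : ℝ) :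
    ‖pbslice W l f‖ ≤ 1 := by
  rw [pbslice_eq hW]
  have hv : volume {g | (f, g) ∈ W} ≤ 1 := by
    calc volume {g | (f, g) ∈ W} ≤ volume (Set.Icc (-(1 / 2) : ℝ) (1 / 2)) := by
          apply measure_mono
          intro g hg
          exact (hsub hg).2
      _ = 1 := by rw [Real.volume_Icc]; norm_num
  refine (norm_setIntegral_le_of_norm_le_const (C := 1) (hv.trans_lt (by simp)) (fun x _ => (pbE_norm l x).le)).trans ?_
  rw [one_mul]
  exact ENNReal.toReal_le_of_le_ofReal (by norm_num) (by simpa using hv)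

lemma pbslice_zero
    (hsub : W ⊆ Set.Icc (-(1 / 2) : ℝ) (1 / 2) ×ˢ Set.Icc (-(1 / 2) : ℝ) (1 / 2)) (l : ℤ) (f : ℝ)
    (hf : f ∉ Set.Icc (-(1/2) : ℝ) (1/2)) : pbslice W l f = 0 := by
  unfold pbslice
  have : ∀ g, pbInd W (f, g) = 0 := by
    intro g
    unfold pbInd
    rw [Set.indicator_of_notMem]
    intro h
    exact hf (hsub h).1
  simp [this]

lemma pbcoef_eq (hW : MeasurableSet W)
    (hsub : W ⊆ Set.Icc (-(1 / 2) : ℝ) (1 / 2) ×ˢ Set.Icc (-(1 / 2) : ℝ) (1 / 2)) (k l : ℤ) :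
    pbcoef W k l = ∫ f, pbE k f * pbslice W l f := by
  have hfin : volume W ≠ ⊤ := by
    refine ((measure_mono hsub).trans_lt ?_).ne
    rw [Measure.volume_eq_prod, Measure.prod_prod]
    simp [ENNReal.mul_lt_top]
  have hcont : Continuous (fun p : ℝ × ℝ => pbE k p.1 * pbE l p.2) :=
    ((pbE_cont k).comp continuous_fst).mul ((pbE_cont l).comp continuous_snd)
  have hi : IntegrableOn (fun p : ℝ × ℝ => pbE k p.1 * pbE l p.2) W := by
    refine Measure.integrableOn_of_bounded (M := 1) hfin hcont.aestronglyMeasurable ?_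
    refine Filter.Eventually.of_forall fun x => ?_
    simp [pbE_norm]
  unfold pbcoef
  rw [← integral_indicator hW, Measure.volume_eq_prod,
    integral_prod _ (by rw [← Measure.volume_eq_prod]; exact hi.integrable_indicator hW)]
  congr 1
  ext f
  unfold pbslice
  rw [← integral_const_mul]
  congr 1
  ext g
  unfold pbInd
  by_cases h : (f, g) ∈ W <;> simp [h, Set.indicator]

lemma pb_col (hW : MeasurableSet W)
    (hsub : W ⊆ Set.Icc (-(1 / 2) : ℝ) (1 / 2) ×ˢ Set.Icc (-(1 / 2) : ℝ) (1 / 2)) (l : ℤ) :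
    ∑' k : ℤ, ‖pbcoef W k l‖ₑ ^ 2 = ∫⁻ f, ‖pbslice W l f‖ₑ ^ 2 := by
  simp only [pbcoef_eq hW hsub]
  exact pb_parseval _ (pbslice_meas hW l) (pbslice_le hW hsub l) (pbslice_zero hsub l)

lemma pb_total (hW : MeasurableSet W)
    (hsub : W ⊆ Set.Icc (-(1 / 2) : ℝ) (1 / 2) ×ˢ Set.Icc (-(1 / 2) : ℝ) (1 / 2)) :
    ∑' l : ℤ, ∑' k : ℤ, ‖pbcoef W k l‖ₑ ^ 2 = volume W := by
  simp only [pb_col hW hsub]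
  rw [← lintegral_tsum (fun l => ((pbslice_meas hW l).enorm.pow_const 2).aemeasurable)]
  have : ∀ f, ∑' l : ℤ, ‖pbslice W l f‖ₑ ^ 2 = ∫⁻ g, ‖pbInd W (f, g)‖ₑ ^ 2 := by
    intro f
    apply pb_parseval
    · exact (pbInd_meas hW).comp_measurable measurable_prodMk_left
    · intro x
      unfold pbInd
      by_cases h : (f, x) ∈ W <;> simp [h, Set.indicator]
    · intro x hx
      unfold pbInd
      rw [Set.indicator_of_notMem]
      intro h
      exact hx (hsub h).2
  simp only [this]
  rw [Measure.volume_eq_prod, Measure.prod_apply hW]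
  congr 1
  ext f
  rw [← lintegral_indicator_one (measurable_prodMk_left hW)]
  congr 1
  ext g
  unfold pbInd
  by_cases h : (f, g) ∈ W <;> simp [h, Set.indicator]
lemma pbE_Icc (l : ℤ) (hl : l ≠ 0) (x y : ℝ) (hxy : x ≤ y) :
    ‖∫ g in Set.Icc x y, pbE l g‖ ≤ 1 / |(l:ℝ)| := by
  rw [integral_Icc_eq_integral_Ioc, ← intervalIntegral.integral_of_le hxy]
  have hl' : (0:ℝ) < |(l:ℝ)| := by simpa using hl
  have hc : (-(2 * (π:ℂ) * l * Complex.I)) ≠ 0 := by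
    simp [hl, Real.pi_ne_zero]
  have e : ∀ g : ℝ, pbE l g = Complex.exp ((-(2 * (π:ℂ) * l * Complex.I)) * g) := by
    intro g; unfold pbE; congr 1; push_cast; ring
  have e1 := e x
  have e2 := e y
  simp only [e]
  rw [integral_exp_mul_complex hc, ← e1, ← e2, norm_div]
  have n1 : ‖pbE l y - pbE l x‖ ≤ 2 := by
    refine (norm_sub_le _ _).trans ?_
    rw [pbE_norm, pbE_norm]; norm_num
  have n2 : ‖(-(2 * (π:ℂ) * l * Complex.I))‖ = 2 * π * |(l:ℝ)| := by
    simp [abs_of_pos Real.pi_pos]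
  rw [n2, div_le_div_iff₀ (by positivity) hl']
  have := Real.pi_gt_three
  nlinarith

lemma pband_closed (a b c d u v W0 W1 : ℝ) : IsClosed (pband a b c d u v W0 W1) := by
  have h1 : IsClosed {p : ℝ × ℝ | |a * p.1 + b * p.2 - u| ≤ W0} :=
    isClosed_le (by fun_prop) (by fun_prop)
  have h2 : IsClosed {p : ℝ × ℝ | |c * p.1 + d * p.2 - v| ≤ W1} :=
    isClosed_le (by fun_prop) (by fun_prop)
  exact h1.inter h2

lemma pband_slice (a b c d u v W0 W1 : ℝ)
    (hsub : pband a b c d u v W0 W1 ⊆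
      Set.Icc (-(1 / 2) : ℝ) (1 / 2) ×ˢ Set.Icc (-(1 / 2) : ℝ) (1 / 2)) (l : ℤ) (hl : l ≠ 0) (f : ℝ) :
    ‖pbslice (pband a b c d u v W0 W1) l f‖ ≤ 1 / |(l:ℝ)| := by
  have hcl := pband_closed a b c d u v W0 W1
  rw [pbslice_eq hcl.measurableSet]
  set S := {g | (f, g) ∈ pband a b c d u v W0 W1} with hS
  rcases S.eq_empty_or_nonempty with h | h
  · rw [h]; simp
  · have hSc : IsClosed S := hcl.preimage (by fun_prop : Continuous fun g : ℝ => (f, g))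
    have hSk : IsCompact S := isCompact_Icc.of_isClosed_subset hSc (fun g hg => (hsub hg).2)
    have hconv : Convex ℝ S := by
      intro x hx y hy s t hs ht hst
      simp only [hS, pband, mem_setOf_eq, abs_le, smul_eq_mul] at hx hy ⊢
      have : s = 1 - t := by linarith
      subst this
      refine ⟨⟨?_, ?_⟩, ?_, ?_⟩ <;> nlinarith
    have := eq_Icc_of_connected_compact ⟨h, hconv.isPreconnected⟩ hSk
    rw [this]
    apply pbE_Icc l hl
    by_contra hlt
    rw [Icc_eq_empty hlt] at this
    exact h.ne_empty this

lemma pband_col (a b c d u v W0 W1 : ℝ)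
    (hsub : pband a b c d u v W0 W1 ⊆
      Set.Icc (-(1 / 2) : ℝ) (1 / 2) ×ˢ Set.Icc (-(1 / 2) : ℝ) (1 / 2)) (l : ℤ) (hl : l ≠ 0) :
    ∑' k : ℤ, ‖pbcoef (pband a b c d u v W0 W1) k l‖ₑ ^ 2 ≤ ENNReal.ofReal (1 / (l:ℝ)^2) := by
  have hcl := pband_closed a b c d u v W0 W1
  rw [pb_col hcl.measurableSet hsub]
  calc _ ≤ ∫⁻ f, (Set.Icc (-(1/2) : ℝ) (1/2)).indicator (fun _ => ENNReal.ofReal (1 / (l:ℝ)^2)) f := by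
        apply lintegral_mono
        intro f
        by_cases hf : f ∈ Set.Icc (-(1/2) : ℝ) (1/2)
        · rw [Set.indicator_of_mem hf]
          simp only
          rw [← ofReal_norm_eq_enorm, ← ENNReal.ofReal_pow (norm_nonneg _)]
          apply ENNReal.ofReal_le_ofReal
          calc _ ≤ (1 / |(l:ℝ)|)^2 := by
                gcongr; exact pband_slice _ _ _ _ _ _ _ _ hsub l hl f
            _ = _ := by rw [div_pow, sq_abs, one_pow]
        · simp [pbslice_zero hsub l f hf]
    _ = _ := by
      rw [lintegral_indicator_const measurableSet_Icc, Real.volume_Icc]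
      norm_num

lemma pband_swap (a b c d u v W0 W1 : ℝ) :
    pband b a d c u v W0 W1 = Prod.swap ⁻¹' (pband a b c d u v W0 W1) := by
  ext ⟨x, y⟩
  simp [pband, add_comm]

lemma pbcoef_swap (a b c d u v W0 W1 : ℝ) (k l : ℤ) :
    pbcoef (pband b a d c u v W0 W1) l k = pbcoef (pband a b c d u v W0 W1) k l := by
  rw [pband_swap]
  unfold pbcoef
  have hmp : MeasurePreserving (Prod.swap : ℝ × ℝ → ℝ × ℝ) volume volume :=
    Measure.measurePreserving_swap
  have := hmp.setIntegral_preimage_emb MeasurableEquiv.prodComm.measurableEmbedding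
    (fun p : ℝ × ℝ => pbE k p.1 * pbE l p.2) (pband a b c d u v W0 W1)
  rw [← this]
  simp [mul_comm]

lemma pband_volume (a b c d u v W0 W1 : ℝ) (hV : a * d - b * c ≠ 0) (hW0 : 0 < W0) (hW1 : 0 < W1) :
    volume (pband a b c d u v W0 W1) = ENNReal.ofReal (4 * W0 * W1 / |a * d - b * c|) := by
  set L := Matrix.toLin (Module.Basis.finTwoProd ℝ) (Module.Basis.finTwoProd ℝ) !![a, b; c, d] with hL
  have hdet : LinearMap.det L = a * d - b * c := by
    rw [hL, LinearMap.det_toLin, Matrix.det_fin_two_of]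
  have hpre : pband a b c d u v W0 W1 = L ⁻¹' (Set.Icc (u - W0) (u + W0) ×ˢ Set.Icc (v - W1) (v + W1)) := by
    ext ⟨x, y⟩
    simp only [pband, mem_setOf_eq, mem_preimage, hL, Matrix.toLin_finTwoProd_apply, mem_prod, mem_Icc, abs_le]
    constructor
    · rintro ⟨⟨h1, h2⟩, h3, h4⟩
      refine ⟨⟨?_, ?_⟩, ?_, ?_⟩ <;> linarith
    · rintro ⟨⟨h1, h2⟩, h3, h4⟩
      refine ⟨⟨?_, ?_⟩, ?_, ?_⟩ <;> linarith
  rw [hpre, Measure.addHaar_preimage_linearMap _ (by rw [hdet]; exact hV), hdet,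
    Measure.volume_eq_prod, Measure.prod_prod, Real.volume_Icc, Real.volume_Icc,
    ← ENNReal.ofReal_mul (by linarith), ← ENNReal.ofReal_mul (by positivity)]
  congr 1
  rw [abs_inv]
  field_simp
  ring

lemma prolate_eq (M N : ℕ) (W : Set (ℝ × ℝ)) (i j : Fin M × Fin N) :
    prolate2D M N W i j = pbcoef W (((j.1:ℕ):ℤ) - ((i.1:ℕ):ℤ)) (((j.2:ℕ):ℤ) - ((i.2:ℕ):ℤ)) := by
  unfold prolate2D pbcoef pbE
  congr 1
  ext p
  rw [← Complex.exp_add]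
  congr 1
  push_cast
  ring

theorem parallelogram_band_frobenius_lower_bound
    (a b c d u v W0 W1 : ℝ) (hV : a * d - b * c ≠ 0) (hW0 : 0 < W0) (hW1 : 0 < W1)
    (hsub : pband a b c d u v W0 W1 ⊆
      Set.Icc (-(1 / 2) : ℝ) (1 / 2) ×ˢ Set.Icc (-(1 / 2) : ℝ) (1 / 2)) :
    ∃ C : ℝ, 0 < C ∧
      ∀ (M N : ℕ), 2 ≤ M → 2 ≤ N →
        (M : ℝ) * (N : ℝ) * (4 * W0 * W1 / |a * d - b * c|)
            - C * ((M : ℝ) * Real.log (N : ℝ) + (N : ℝ) * Real.log (M : ℝ))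
          ≤ ∑ i : Fin M × Fin N, ∑ j : Fin M × Fin N,
              ‖prolate2D M N (pband a b c d u v W0 W1) i j‖ ^ 2 := by
  refine ⟨8, by norm_num, fun M N hM hN => ?_⟩
  have hsub' : pband b a d c u v W0 W1 ⊆
      Set.Icc (-(1 / 2) : ℝ) (1 / 2) ×ˢ Set.Icc (-(1 / 2) : ℝ) (1 / 2) := by
    rw [pband_swap]
    intro p hp
    exact ⟨(hsub hp).2, (hsub hp).1⟩
  have hcl := pband_closed a b c d u v W0 W1
  have key := pb_comb (fun k l => ‖pbcoef (pband a b c d u v W0 W1) k l‖ₑ ^ 2)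
    (fun k hk => by
      simp only [← pbcoef_swap a b c d]
      exact pband_col b a d c u v W0 W1 hsub' k hk)
    (fun l hl => pband_col a b c d u v W0 W1 hsub l hl) M N hM hN
  rw [ENNReal.tsum_comm, pb_total hcl.measurableSet hsub, pband_volume _ _ _ _ _ _ _ _ hV hW0 hW1] at key
  have e : ∀ z : ℂ, ‖z‖ₑ ^ 2 = ENNReal.ofReal (‖z‖^2) := by
    intro z
    rw [ENNReal.ofReal_pow (norm_nonneg _), ofReal_norm_eq_enorm]
  have hM' : 0 ≤ Real.log M := Real.log_natCast_nonneg M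
  have hN' : 0 ≤ Real.log N := Real.log_natCast_nonneg N
  have hsum : (∑ m : Fin M, ∑ p : Fin M, ∑ n : Fin N, ∑ q : Fin N,
        ‖pbcoef (pband a b c d u v W0 W1) (((p:ℕ):ℤ) - ((m:ℕ):ℤ)) (((q:ℕ):ℤ) - ((n:ℕ):ℤ))‖ₑ ^ 2)
      = ENNReal.ofReal (∑ i : Fin M × Fin N, ∑ j : Fin M × Fin N,
              ‖prolate2D M N (pband a b c d u v W0 W1) i j‖ ^ 2) := by
    rw [ENNReal.ofReal_sum_of_nonneg (fun _ _ => by positivity)]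
    rw [Fintype.sum_prod_type]
    refine Finset.sum_congr rfl fun m _ => ?_
    rw [Finset.sum_comm]
    refine Finset.sum_congr rfl fun n _ => ?_
    rw [ENNReal.ofReal_sum_of_nonneg (fun _ _ => by positivity), Fintype.sum_prod_type]
    simp only [e, prolate_eq]
  rw [hsum, ← ENNReal.ofReal_natCast M, ← ENNReal.ofReal_natCast N,
    ← ENNReal.ofReal_mul (by positivity), ← ENNReal.ofReal_mul (by positivity),
    ← ENNReal.ofReal_mul (by positivity), ← ENNReal.ofReal_mul (by positivity),
    ← ENNReal.ofReal_add (by positivity) (by positivity),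
    ← ENNReal.ofReal_add (by positivity) (by positivity),
    ENNReal.ofReal_le_ofReal_iff (by positivity)] at key
  linarith
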